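/- arXiv:2003.03407 — 2 statements merged into one kernel-verified Lean document; each statement's English description precedes it below -/
import Mathlib

section
/- Let T>0, let Ω ⊂ ℝ^d be open and bounded, and let J : cl(Ω) × cl(Ω) → ℝ be continuous. Suppose (g_n) is a bounded sequence in L^∞(Ω) with g_n ⇀ g weakly-* in L^∞(Ω) (that is, ∫_Ω g_n ψ dx → ∫_Ω g ψ dx for every ψ ∈ L¹(Ω)), and suppose φ_n : cl(Ω) × [0,T] → ℝ are bounded functions converging uniformly on cl(Ω) × [0,T] to a continuous function φ. Then sup over (y,t) ∈ cl(Ω) × [0,T] of |∫_Ω J(x,y) g_n(x) φ_n(x,t) dx − ∫_Ω J(x,y) g(x) φ(x,t) dx| tends to 0 as n → ∞. -/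
open MeasureTheory Set Filter Topology

/-!
Put `f_p(x) = J(x,y) φ(x,t)` for `p = (y,t)` in the compact set `cl(Ω) × [0,T]`. Since `f` is
jointly continuous and `cl(Ω)` is compact, `f_p` is uniformly close to `f_q` on `cl(Ω)` when `p` is
close to `q`. The `g_n` and their weak-* limit share one `L^∞` bound
(`ae_abs_le_of_weak_limit`), so the functionals `p ↦ ∫ g_n f_p` are equicontinuous
(`abs_integral_mul_sub_le`); as they converge pointwise by weak-* convergence, they converge
uniformly on the compact parameter set. Replacing `φ` by `φ_n` costs an error controlled by the
same `L^∞` bound and the uniform convergence `φ_n → φ`.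
-/

/-- A function bounded by `M` defines a functional that is Lipschitz for the sup norm. -/
lemma abs_integral_mul_sub_le {α : Type*} [MeasurableSpace α] {μ : Measure α} [IsFiniteMeasure μ]
    {h ψ₁ ψ₂ : α → ℝ} {M δ : ℝ} (hM : 0 ≤ M) (hm : AEStronglyMeasurable h μ)
    (hb : ∀ᵐ x ∂μ, |h x| ≤ M) (h₁ : Integrable ψ₁ μ) (h₂ : Integrable ψ₂ μ)
    (hd : ∀ᵐ x ∂μ, |ψ₁ x - ψ₂ x| ≤ δ) :
    |(∫ x, h x * ψ₁ x ∂μ) - ∫ x, h x * ψ₂ x ∂μ| ≤ M * δ * μ.real univ := by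
  rw [← integral_sub (h₁.bdd_mul hm hb) (h₂.bdd_mul hm hb), ← Real.norm_eq_abs]
  apply norm_integral_le_of_norm_le_const
  filter_upwards [hb, hd] with x hx hx'
  rw [← mul_sub, Real.norm_eq_abs, abs_mul]
  exact mul_le_mul hx hx' (abs_nonneg _) hM

/-- One-sided bounds pass to weak limits. The integrals against `γ` are not assumed to exist, so
the test functions are indicators of the sets `{M < γ ≤ k}`, on which `γ` is bounded. -/
lemma ae_le_of_weak_limit {α : Type*} [MeasurableSpace α] {μ : Measure α} [IsFiniteMeasure μ]
    {g : ℕ → α → ℝ} {γ : α → ℝ} {M : ℝ} (hg : ∀ n, AEStronglyMeasurable (g n) μ)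
    (hγ : AEStronglyMeasurable γ μ) (hb : ∀ n, ∀ᵐ x ∂μ, |g n x| ≤ M)
    (hw : ∀ ψ : α → ℝ, Integrable ψ μ →
      Tendsto (fun n => ∫ x, g n x * ψ x ∂μ) atTop (𝓝 (∫ x, γ x * ψ x ∂μ))) :
    ∀ᵐ x ∂μ, γ x ≤ M := by
  obtain ⟨γ', hγ'm, hγγ'⟩ := hγ
  have key : ∀ k : ℕ, ∀ᵐ x ∂μ, ¬ (M < γ' x ∧ γ' x ≤ k) := by
    intro k
    let A : Set α := {x | M < γ' x ∧ γ' x ≤ k}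
    have hA : MeasurableSet A :=
      (measurableSet_lt measurable_const hγ'm.measurable).inter
        (measurableSet_le hγ'm.measurable measurable_const)
    have hψ : Integrable (A.indicator (fun _ => (1 : ℝ))) μ :=
      (integrable_const 1).indicator hA
    have hmul : ∀ (u : α → ℝ), (∫ x, u x * A.indicator (fun _ => (1 : ℝ)) x ∂μ)
        = ∫ x in A, u x ∂μ := by
      intro u
      rw [← integral_indicator hA]
      congr 1
      ext x
      by_cases hx : x ∈ A <;> simp [hx]
    have hlim := hw _ hψ
    simp only [hmul] at hlim
    have hle : ∫ x in A, γ x ∂μ ≤ M * μ.real A := by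
      refine le_of_tendsto' hlim fun n => ?_
      have hi : Integrable (g n) μ := Integrable.of_bound (hg n) M (hb n)
      calc ∫ x in A, g n x ∂μ ≤ ∫ x in A, M ∂μ := by
            apply integral_mono_ae hi.integrableOn (integrable_const M)
            filter_upwards [ae_restrict_of_ae (hb n)] with x hx
            exact (abs_le.1 hx).2
        _ = M * μ.real A := by simp [mul_comm]
    have hcongr : ∫ x in A, γ x ∂μ = ∫ x in A, γ' x ∂μ :=
      integral_congr_ae (ae_restrict_of_ae hγγ')
    have hi' : Integrable γ' (μ.restrict A) := by
      refine Integrable.of_bound hγ'm.aestronglyMeasurable (max |M| |(k : ℝ)|) ?_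
      filter_upwards [ae_restrict_mem hA] with x hx
      exact abs_le_max_abs_abs hx.1.le hx.2
    have hnn : 0 ≤ᵐ[μ.restrict A] fun x => γ' x - M := by
      filter_upwards [ae_restrict_mem hA] with x hx
      exact sub_nonneg.2 hx.1.le
    have hz : ∫ x in A, (γ' x - M) ∂μ = 0 := by
      apply le_antisymm _ (integral_nonneg_of_ae hnn)
      rw [integral_sub hi' (integrable_const M), ← hcongr]
      simp only [integral_const, smul_eq_mul, measureReal_restrict_apply_univ]
      linarith
    rw [integral_eq_zero_iff_of_nonneg_ae hnn (hi'.sub (integrable_const M))] at hz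
    filter_upwards [(ae_restrict_iff' hA).1 hz] with x hx hxA
    have h0 : γ' x - M = 0 := hx hxA
    linarith [hxA.1]
  filter_upwards [ae_all_iff.2 key, hγγ'] with x hx hx'
  rw [hx']
  by_contra! hlt
  obtain ⟨k, hk⟩ := exists_nat_ge (γ' x)
  exact hx k ⟨hlt, hk⟩

lemma ae_abs_le_of_weak_limit {α : Type*} [MeasurableSpace α] {μ : Measure α} [IsFiniteMeasure μ]
    {g : ℕ → α → ℝ} {γ : α → ℝ} {M : ℝ} (hg : ∀ n, AEStronglyMeasurable (g n) μ)
    (hγ : AEStronglyMeasurable γ μ) (hb : ∀ n, ∀ᵐ x ∂μ, |g n x| ≤ M)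
    (hw : ∀ ψ : α → ℝ, Integrable ψ μ →
      Tendsto (fun n => ∫ x, g n x * ψ x ∂μ) atTop (𝓝 (∫ x, γ x * ψ x ∂μ))) :
    ∀ᵐ x ∂μ, |γ x| ≤ M := by
  have h₁ := ae_le_of_weak_limit hg hγ hb hw
  have h₂ := ae_le_of_weak_limit (g := fun n x => - g n x) (γ := fun x => - γ x) (M := M)
    (fun n => (hg n).neg) hγ.neg (by simpa using hb) (fun ψ hψ => by
      simpa [integral_neg] using (hw ψ hψ).neg)
  filter_upwards [h₁, h₂] with x hx hx'
  exact abs_le.2 ⟨by linarith, hx⟩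

/-- Let `T > 0`, `Ω ⊆ ℝ^d` open and bounded, `J` continuous on
`cl(Ω) × cl(Ω)`.  If `(g_n)` is bounded in `L^∞(Ω)` and converges weakly-* to `g`
(i.e. against every `L¹(Ω)` function), and `φ_n` are bounded (measurable in `x`) functions
converging uniformly on `cl(Ω) × [0,T]` to a continuous `φ`, then
`sup_{(y,t) ∈ cl(Ω) × [0,T]} |∫_Ω J(x,y) g_n(x) φ_n(x,t) dx − ∫_Ω J(x,y) g(x) φ(x,t) dx| → 0`. -/
theorem stmt_1 {d : ℕ} (T : ℝ) (hT : 0 < T)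
    (Ω : Set (EuclideanSpace ℝ (Fin d))) (hΩo : IsOpen Ω) (hΩb : Bornology.IsBounded Ω)
    (J : EuclideanSpace ℝ (Fin d) → EuclideanSpace ℝ (Fin d) → ℝ)
    (hJcont : ContinuousOn (fun p : EuclideanSpace ℝ (Fin d) × EuclideanSpace ℝ (Fin d) =>
      J p.1 p.2) (closure Ω ×ˢ closure Ω))
    (g : ℕ → EuclideanSpace ℝ (Fin d) → ℝ) (glim : EuclideanSpace ℝ (Fin d) → ℝ)
    (hgmeas : ∀ n, AEStronglyMeasurable (g n) (volume.restrict Ω))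
    (hglimmeas : AEStronglyMeasurable glim (volume.restrict Ω))
    (M : ℝ) (hgbd : ∀ n, ∀ᵐ x ∂volume.restrict Ω, |g n x| ≤ M)
    (hgweak : ∀ ψ : EuclideanSpace ℝ (Fin d) → ℝ, Integrable ψ (volume.restrict Ω) →
      Tendsto (fun n => ∫ x in Ω, g n x * ψ x) atTop (𝓝 (∫ x in Ω, glim x * ψ x)))
    (φn : ℕ → EuclideanSpace ℝ (Fin d) → ℝ → ℝ) (φ : EuclideanSpace ℝ (Fin d) → ℝ → ℝ)
    (Mφ : ℝ) (hφbd : ∀ n x t, |φn n x t| ≤ Mφ)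
    (hφnmeas : ∀ n t, AEStronglyMeasurable (fun x => φn n x t) (volume.restrict Ω))
    (hφcont : ContinuousOn (fun p : EuclideanSpace ℝ (Fin d) × ℝ => φ p.1 p.2)
      (closure Ω ×ˢ Icc 0 T))
    (hunif : TendstoUniformlyOn (fun n (p : EuclideanSpace ℝ (Fin d) × ℝ) => φn n p.1 p.2)
      (fun p => φ p.1 p.2) atTop (closure Ω ×ˢ Icc 0 T)) :
    ∀ ε > 0, ∃ N, ∀ n ≥ N, ∀ y ∈ closure Ω, ∀ t ∈ Icc (0:ℝ) T,
      |(∫ x in Ω, J x y * g n x * φn n x t) - ∫ x in Ω, J x y * glim x * φ x t| < ε := by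
  intro ε hε
  have hK : IsCompact (closure Ω) := hΩb.isCompact_closure
  have hfin : IsFiniteMeasure (volume.restrict Ω) :=
    ⟨by simpa using hΩb.measure_lt_top⟩
  have hΩae : ∀ᵐ x ∂volume.restrict Ω, x ∈ closure Ω := by
    filter_upwards [ae_restrict_mem hΩo.measurableSet] with x hx using subset_closure hx
  have hglimbd := ae_abs_le_of_weak_limit hgmeas hglimmeas hgbd hgweak
  -- `M` may be negative when `Ω` is empty
  obtain ⟨B, hB0, hMB⟩ : ∃ B : ℝ, 0 ≤ B ∧ M ≤ B := ⟨max M 0, le_max_right _ _, le_max_left _ _⟩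
  have hgB : ∀ n, ∀ᵐ x ∂volume.restrict Ω, |g n x| ≤ B := fun n =>
    (hgbd n).mono fun x hx => hx.trans hMB
  have hglimB : ∀ᵐ x ∂volume.restrict Ω, |glim x| ≤ B :=
    hglimbd.mono fun x hx => hx.trans hMB
  obtain ⟨C, hC⟩ := (hK.prod hK).exists_bound_of_continuousOn hJcont
  have hJC : ∀ x ∈ closure Ω, ∀ y ∈ closure Ω, |J x y| ≤ max C 0 := fun x hx y hy =>
    (hC (x, y) ⟨hx, hy⟩).trans (le_max_left _ _)
  have hC0 : 0 ≤ max C 0 := le_max_right _ _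
  generalize max C 0 = C' at hJC hC0
  let P : Set (EuclideanSpace ℝ (Fin d) × ℝ) := closure Ω ×ˢ Icc 0 T
  have hP : IsCompact P := hK.prod isCompact_Icc
  let f : EuclideanSpace ℝ (Fin d) × ℝ → EuclideanSpace ℝ (Fin d) → ℝ :=
    fun p x => J x p.1 * φ x p.2
  have hf : ContinuousOn f.uncurry (P ×ˢ closure Ω) := by
    apply ContinuousOn.mul
    · exact hJcont.comp (f := fun q : (EuclideanSpace ℝ (Fin d) × ℝ) × EuclideanSpace ℝ (Fin d) =>
        (q.2, q.1.1)) (by fun_prop) fun q hq => ⟨hq.2, hq.1.1⟩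
    · exact hφcont.comp (f := fun q : (EuclideanSpace ℝ (Fin d) × ℝ) × EuclideanSpace ℝ (Fin d) =>
        (q.2, q.1.2)) (by fun_prop) fun q hq => ⟨hq.2, hq.1.2⟩
  have hfint : ∀ p ∈ P, Integrable (f p) (volume.restrict Ω) := by
    intro p hp
    have hc : ContinuousOn (f p) (closure Ω) :=
      hf.comp (f := fun x => (p, x)) (by fun_prop) fun x hx => ⟨hp, hx⟩
    exact (hc.integrableOn_compact hK).mono_set subset_closure
  have hJint : ∀ y ∈ closure Ω, ∀ n t,
      Integrable (fun x => J x y * φn n x t) (volume.restrict Ω) := by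
    intro y hy n t
    have hc : ContinuousOn (fun x => J x y) (closure Ω) :=
      hJcont.comp (f := fun x => (x, y)) (by fun_prop) fun x hx => ⟨hx, hy⟩
    have hi : Integrable (fun x => J x y) (volume.restrict Ω) :=
      (hc.integrableOn_compact hK).mono_set subset_closure
    exact hi.mul_bdd (c := Mφ) (hφnmeas n t) (Eventually.of_forall fun x => hφbd n x t)
  set m := (volume.restrict Ω).real univ with hm
  have hm0 : 0 ≤ m := measureReal_nonneg
  have hBm : 0 ≤ B * m := mul_nonneg hB0 hm0
  -- a sup-norm error `δ` in the test function changes each pairing by less than `ε / 4`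
  obtain ⟨δ, hδ, hδε⟩ : ∃ δ > 0, B * δ * m < ε / 4 := by
    refine ⟨ε / 4 / (B * m + 1), by positivity, ?_⟩
    rw [show B * (ε / 4 / (B * m + 1)) * m = (B * m) * (ε / 4) / (B * m + 1) by ring,
      div_lt_iff₀ (by positivity)]
    nlinarith
  have hφn : ∀ᶠ n in atTop, ∀ p ∈ P, ∀ x ∈ closure Ω,
      |J x p.1 * φn n x p.2 - f p x| ≤ δ := by
    filter_upwards [Metric.tendstoUniformlyOn_iff.1 hunif (δ / (C' + 1)) (by positivity)]
      with n hn p hp x hx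
    have h₁ := hn (x, p.2) ⟨hx, hp.2⟩
    rw [dist_comm, Real.dist_eq] at h₁
    rw [← mul_sub, abs_mul]
    calc |J x p.1| * |φn n x p.2 - φ x p.2| ≤ (C' + 1) * (δ / (C' + 1)) :=
          mul_le_mul ((hJC x hx p.1 hp.1).trans (by linarith)) h₁.le (abs_nonneg _)
            (by positivity)
      _ = δ := by field_simp
  have hloc : ∀ᶠ n in atTop, ∀ p ∈ P,
      |(∫ x in Ω, g n x * f p x) - ∫ x in Ω, glim x * f p x| < 3 * (ε / 4) := by
    suffices h : ∀ᶠ n in atTop, ∀ p ∈ P, p ∈ P →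
        |(∫ x in Ω, g n x * f p x) - ∫ x in Ω, glim x * f p x| < 3 * (ε / 4) from
      h.mono fun n hn p hp => hn p hp hp
    refine hP.induction_on (p := fun s => ∀ᶠ n in atTop, ∀ p ∈ s, p ∈ P →
      |(∫ x in Ω, g n x * f p x) - ∫ x in Ω, glim x * f p x| < 3 * (ε / 4)) (by simp)
      (fun s t hst ht => ht.mono fun n hn p hp => hn p (hst hp)) ?_ ?_
    · intro s t hs ht
      filter_upwards [hs, ht] with n h₁ h₂ p hp
      exact hp.elim (h₁ p) (h₂ p)
    · intro q hq
      obtain ⟨v, hv, hvd⟩ := hK.mem_uniformity_of_prod hf hq (Metric.dist_mem_uniformity hδ)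
      refine ⟨v, hv, ?_⟩
      filter_upwards [Metric.tendsto_nhds.1 (hgweak (f q) (hfint q hq)) (ε / 4) (by positivity)]
        with n hn p hpv hpP
      have hd : ∀ᵐ x ∂volume.restrict Ω, |f p x - f q x| ≤ δ :=
        hΩae.mono fun x hx => (hvd p hpv x hx).le
      have h₁ := abs_integral_mul_sub_le hB0 (hgmeas n) (hgB n) (hfint p hpP) (hfint q hq) hd
      have h₂ := abs_integral_mul_sub_le hB0 hglimmeas hglimB (hfint p hpP) (hfint q hq) hd
      rw [Real.dist_eq] at hn
      rw [← hm] at h₁ h₂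
      rw [abs_le] at h₁ h₂
      rw [abs_lt] at hn ⊢
      constructor <;> linarith [h₁.1, h₁.2, h₂.1, h₂.2, hn.1, hn.2]
  obtain ⟨N, hN⟩ := eventually_atTop.1 (hφn.and hloc)
  refine ⟨N, fun n hn y hy t ht => ?_⟩
  obtain ⟨h₁, h₂⟩ := hN n hn
  have hp : (y, t) ∈ P := ⟨hy, ht⟩
  have h₃ := abs_integral_mul_sub_le hB0 (hgmeas n) (hgB n) (hJint y hy n t) (hfint (y, t) hp)
    (hΩae.mono fun x hx => h₁ (y, t) hp x hx)
  have h₄ := h₂ (y, t) hp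
  have e₁ : ∫ x in Ω, J x y * g n x * φn n x t = ∫ x in Ω, g n x * (J x y * φn n x t) := by
    congr 1; ext x; ring
  have e₂ : ∫ x in Ω, J x y * glim x * φ x t = ∫ x in Ω, glim x * f (y, t) x := by
    congr 1; ext x; simp only [f]; ring
  rw [e₁, e₂]
  rw [← hm, abs_le] at h₃
  rw [abs_lt] at h₄ ⊢
  constructor <;> linarith [h₃.1, h₃.2, h₄.1, h₄.2]
end

section
/- Let Ω ⊂ ℝ^d be open and bounded, let J : cl(Ω) × cl(Ω) → ℝ be continuous and symmetric (J(x,y) = J(y,x)), let θ : Ω → [0,1] be measurable, and let (a, b) : [0,T] → L²(Ω) × L²(Ω) be a continuously differentiable solution of the limit system ∂a/∂t(x,t) = ∫_Ω J(x,y)(a(y,t) − a(x,t)) dy − θ(x)∫_Ω J(x,y)a(y,t) dy + (1−θ(x))∫_Ω J(x,y)b(y,t) dy and ∂b/∂t(x,t) = θ(x)∫_Ω J(x,y)a(y,t) dy − b(x,t)∫_Ω J(x,y)(1−θ(y)) dy. Then the total mass ∫_Ω a(x,t) dx + ∫_Ω b(x,t) dx is constant in t ∈ [0,T]. -/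
/-!
Integrating over `Ω` is a continuous linear functional on `L²(Ω)`, because `Ω` has finite measure,
so the total mass is differentiable in `t` with derivative `∫ a' + ∫ b'`. Adding the two equations,
the terms `θ(x) ∫ J(x,y) a(y) dy` cancel and what is left is `∫ H(x,y) dy` with
`H(x,y) = J(x,y) (a(y) - a(x)) + J(x,y) ((1 - θ(x)) b(y) - b(x) (1 - θ(y)))`.
As `J` is symmetric, `H` is antisymmetric, and by Fubini its double integral vanishes
(`integral_integral_eq_zero_of_antisymm`). Fubini applies because `J` is bounded on the compact set
`cl(Ω) × cl(Ω)`, so that `J` times an integrable function is integrable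
(`exists_bound_of_continuousOn_closure`, `aestronglyMeasurable_kernel`).
-/

open MeasureTheory Set Filter Topology

theorem integral_integral_eq_zero_of_antisymm {α : Type*} [MeasurableSpace α] {μ : Measure α}
    [SFinite μ] {H : α → α → ℝ} (hH : Integrable (fun p : α × α => H p.1 p.2) (μ.prod μ))
    (hanti : ∀ x y, H x y = -H y x) : ∫ x, ∫ y, H x y ∂μ ∂μ = 0 := by
  have h1 : ∫ x, ∫ y, H x y ∂μ ∂μ = ∫ y, ∫ x, H x y ∂μ ∂μ := integral_integral_swap hH
  have h2 : ∫ y, ∫ x, H x y ∂μ ∂μ = -∫ y, ∫ x, H y x ∂μ ∂μ := by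
    rw [← integral_neg]
    refine integral_congr_ae (.of_forall fun y => ?_)
    simp only
    rw [← integral_neg]
    exact integral_congr_ae (.of_forall fun x => hanti x y)
  linarith

/-- On a finite measure space the mass functional `f ↦ ∫ f` on `L²` commutes with time
derivatives: it is the inner product with the constant function `1`. -/
theorem hasDerivWithinAt_integral_Lp {α : Type*} [MeasurableSpace α] {μ : Measure α}
    [IsFiniteMeasure μ] {a : ℝ → Lp ℝ 2 μ} {a' : Lp ℝ 2 μ} {s : Set ℝ} {t : ℝ}
    (h : HasDerivWithinAt a a' s t) :
    HasDerivWithinAt (fun t => ∫ x, a t x ∂μ) (∫ x, a' x ∂μ) s t := by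
  have key : ∀ f : Lp ℝ 2 μ, innerSL ℝ (Lp.const 2 μ (1 : ℝ)) f = ∫ x, f x ∂μ := by
    intro f
    rw [innerSL_apply_apply, L2.inner_def]
    refine integral_congr_ae ?_
    filter_upwards [Lp.coeFn_const (p := 2) (μ := μ) (c := (1 : ℝ))] with x hx
    rw [hx]
    simp
  have := (innerSL ℝ (Lp.const 2 μ (1 : ℝ))).hasFDerivAt.comp_hasDerivWithinAt t h
  simpa only [Function.comp_def, key] using this

theorem exists_bound_of_continuousOn_closure {E : Type*} [NormedAddCommGroup E] [ProperSpace E]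
    {Ω : Set E} (hΩb : Bornology.IsBounded Ω) {J : E → E → ℝ}
    (hJ : ContinuousOn (fun p : E × E => J p.1 p.2) (closure Ω ×ˢ closure Ω)) :
    ∃ C, ∀ x ∈ Ω, ∀ y ∈ Ω, ‖J x y‖ ≤ C := by
  have hc : IsCompact (closure Ω) := hΩb.isCompact_closure
  obtain ⟨C, hC⟩ := (hc.prod hc).exists_bound_of_continuousOn hJ
  exact ⟨C, fun x hx y hy => hC (x, y) ⟨subset_closure hx, subset_closure hy⟩⟩

theorem aestronglyMeasurable_kernel {d : ℕ} {Ω : Set (EuclideanSpace ℝ (Fin d))} (hΩo : IsOpen Ω)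
    {J : EuclideanSpace ℝ (Fin d) → EuclideanSpace ℝ (Fin d) → ℝ}
    (hJ : ContinuousOn (fun p : EuclideanSpace ℝ (Fin d) × EuclideanSpace ℝ (Fin d) =>
      J p.1 p.2) (closure Ω ×ˢ closure Ω)) :
    AEStronglyMeasurable
      (fun p : EuclideanSpace ℝ (Fin d) × EuclideanSpace ℝ (Fin d) => J p.1 p.2)
      ((volume.restrict Ω).prod (volume.restrict Ω)) := by
  rw [Measure.prod_restrict]
  exact (hJ.mono (prod_mono subset_closure subset_closure)).aestronglyMeasurable
    (hΩo.prod hΩo).measurableSet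

/-- The total mass has zero rate of change: `f` and `g` are the right-hand sides of the equations
for `a` and `b` at a fixed time. -/
theorem integral_add_integral_eq_zero {α : Type*} [MeasurableSpace α] {μ : Measure α}
    [IsFiniteMeasure μ] {J : α → α → ℝ} {θ a b f g : α → ℝ} {C : ℝ}
    (hJm : AEStronglyMeasurable (fun p : α × α => J p.1 p.2) (μ.prod μ))
    (hJC : ∀ᵐ p ∂(μ.prod μ), ‖J p.1 p.2‖ ≤ C)
    (hJsymm : ∀ x y, J x y = J y x) (hθ : Integrable θ μ)
    (ha : Integrable a μ) (hb : Integrable b μ) (hf : Integrable f μ) (hg : Integrable g μ)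
    (hfeq : ∀ᵐ x ∂μ, f x = (∫ y, J x y * (a y - a x) ∂μ)
        - θ x * (∫ y, J x y * a y ∂μ) + (1 - θ x) * (∫ y, J x y * b y ∂μ))
    (hgeq : ∀ᵐ x ∂μ, g x = θ x * (∫ y, J x y * a y ∂μ)
        - b x * (∫ y, J x y * (1 - θ y) ∂μ)) :
    ∫ x, f x ∂μ + ∫ x, g x ∂μ = 0 := by
  have hθ1 : Integrable (fun y => 1 - θ y) μ := (integrable_const 1).sub hθ
  have hJmul : ∀ F : α × α → ℝ, Integrable F (μ.prod μ) →
      Integrable (fun p => J p.1 p.2 * F p) (μ.prod μ) := fun F hF => hF.bdd_mul hJm hJC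
  have i1 := hJmul _ ((ha.comp_snd μ).sub (ha.comp_fst μ))
  have i2 := hJmul _ (hb.comp_snd μ)
  have i3 := hJmul _ (hθ1.comp_snd μ)
  have i4 := hJmul _ ((hθ1.mul_prod hb).sub (hb.mul_prod hθ1))
  have hH := integral_integral_eq_zero_of_antisymm (μ := μ)
    (H := fun x y => J x y * (a y - a x) + J x y * ((1 - θ x) * b y - b x * (1 - θ y)))
    (i1.add i4) (fun x y => by rw [hJsymm x y]; ring)
  rw [← integral_add hf hg, ← hH]
  refine integral_congr_ae ?_
  filter_upwards [hfeq, hgeq, i1.prod_right_ae, i2.prod_right_ae, i3.prod_right_ae]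
    with x hfx hgx h1 h2 h3
  simp only [Pi.sub_apply] at h1
  have e : ∀ y, J x y * ((1 - θ x) * b y - b x * (1 - θ y))
      = (1 - θ x) * (J x y * b y) - b x * (J x y * (1 - θ y)) := fun y => by ring
  simp only [e]
  have h4 : Integrable (fun y => (1 - θ x) * (J x y * b y) - b x * (J x y * (1 - θ y))) μ :=
    (h2.const_mul _).sub (h3.const_mul _)
  rw [integral_add h1 h4,
    integral_sub (h2.const_mul _) (h3.const_mul _), integral_const_mul, integral_const_mul,
    hfx, hgx]
  ring

/-- conservation of total mass.  Let `Ω ⊆ ℝ^d` be open and bounded,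
`J` continuous on `cl(Ω) × cl(Ω)` and symmetric, `θ : Ω → [0,1]` measurable, and let
`(a,b) : [0,T] → L²(Ω) × L²(Ω)` be a continuously differentiable solution of the limit
system
`∂a/∂t = ∫_Ω J(x,y)(a(y,t) − a(x,t)) dy − θ(x)∫_Ω J(x,y)a(y,t) dy + (1−θ(x))∫_Ω J(x,y)b(y,t) dy`,
`∂b/∂t = θ(x)∫_Ω J(x,y)a(y,t) dy − b(x,t)∫_Ω J(x,y)(1−θ(y)) dy`.
Then `∫_Ω a(x,t) dx + ∫_Ω b(x,t) dx` is constant on `[0,T]`. -/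
theorem stmt_8 {d : ℕ} (T : ℝ) (hT : 0 < T)
    (Ω : Set (EuclideanSpace ℝ (Fin d))) (hΩo : IsOpen Ω) (hΩb : Bornology.IsBounded Ω)
    (J : EuclideanSpace ℝ (Fin d) → EuclideanSpace ℝ (Fin d) → ℝ)
    (hJcont : ContinuousOn (fun p : EuclideanSpace ℝ (Fin d) × EuclideanSpace ℝ (Fin d) =>
      J p.1 p.2) (closure Ω ×ˢ closure Ω))
    (hJsymm : ∀ x y, J x y = J y x)
    (θ : EuclideanSpace ℝ (Fin d) → ℝ) (hθmeas : Measurable θ)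
    (hθ : ∀ x ∈ Ω, θ x ∈ Icc (0:ℝ) 1)
    (a b a' b' : ℝ → Lp ℝ 2 (volume.restrict Ω))
    (haderiv : ∀ t ∈ Icc (0:ℝ) T, HasDerivWithinAt a (a' t) (Icc 0 T) t)
    (hbderiv : ∀ t ∈ Icc (0:ℝ) T, HasDerivWithinAt b (b' t) (Icc 0 T) t)
    (hacont : ContinuousOn a' (Icc 0 T)) (hbcont : ContinuousOn b' (Icc 0 T))
    (heqa : ∀ t ∈ Icc (0:ℝ) T, ∀ᵐ x ∂(volume.restrict Ω),
      a' t x = (∫ y in Ω, J x y * (a t y - a t x))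
        - θ x * (∫ y in Ω, J x y * a t y)
        + (1 - θ x) * (∫ y in Ω, J x y * b t y))
    (heqb : ∀ t ∈ Icc (0:ℝ) T, ∀ᵐ x ∂(volume.restrict Ω),
      b' t x = θ x * (∫ y in Ω, J x y * a t y)
        - b t x * (∫ y in Ω, J x y * (1 - θ y))) :
    ∀ t ∈ Icc (0:ℝ) T,
      (∫ x in Ω, a t x) + (∫ x in Ω, b t x) = (∫ x in Ω, a 0 x) + (∫ x in Ω, b 0 x) := by
  have : IsFiniteMeasure (volume.restrict Ω) :=
    isFiniteMeasure_restrict.2 hΩb.measure_lt_top.ne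
  obtain ⟨C, hC⟩ := exists_bound_of_continuousOn_closure hΩb hJcont
  have hJC : ∀ᵐ p ∂((volume.restrict Ω).prod (volume.restrict Ω)), ‖J p.1 p.2‖ ≤ C := by
    rw [Measure.prod_restrict]
    filter_upwards [ae_restrict_mem (hΩo.prod hΩo).measurableSet] with p hp
    exact hC _ hp.1 _ hp.2
  have hθi : Integrable θ (volume.restrict Ω) := by
    refine Integrable.of_bound hθmeas.aestronglyMeasurable 1 ?_
    filter_upwards [ae_restrict_mem hΩo.measurableSet] with x hx
    rw [Real.norm_of_nonneg (hθ x hx).1]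
    exact (hθ x hx).2
  have hLp : ∀ f : Lp ℝ 2 (volume.restrict Ω), Integrable f (volume.restrict Ω) :=
    fun f => (Lp.memLp f).integrable one_le_two
  have hderiv : ∀ t ∈ Icc (0:ℝ) T, HasDerivWithinAt
      (fun t => (∫ x in Ω, a t x) + (∫ x in Ω, b t x)) 0 (Icc 0 T) t := by
    intro t ht
    have h := (hasDerivWithinAt_integral_Lp (haderiv t ht)).add
      (hasDerivWithinAt_integral_Lp (hbderiv t ht))
    rwa [integral_add_integral_eq_zero (aestronglyMeasurable_kernel hΩo hJcont) hJC hJsymm hθi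
      (hLp (a t)) (hLp (b t)) (hLp (a' t)) (hLp (b' t)) (heqa t ht) (heqb t ht)] at h
  refine constant_of_derivWithin_zero (fun t ht => (hderiv t ht).differentiableWithinAt)
    fun t ht => ?_
  have ht' := Ico_subset_Icc_self ht
  exact (hderiv t ht').derivWithin (uniqueDiffOn_Icc hT t ht')
end
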